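/- For every integer d ≥ 0, there exist real numbers ε, δ > 0 as follows. Let G be a finite graph and let L be a list assignment for G in which every list has size d+2. If G is weakly d-degenerate, then there exists a probability distribution on L-colorings φ of G such that (i) for all v ∈ V(G) and c ∈ L(v), Prob[φ(v) = c] ≥ ε, and (ii) for every set S ⊆ V(G) with |S| ≤ d and every color c, Prob[φ(v) ≠ c for all v ∈ S] ≥ δ^|S|. -/

import Mathlib

def IsLColoring {V : Type*} (G : SimpleGraph V) (L : V → Finset ℕ) (φ : V → ℕ) : Prop :=
  (∀ v, φ v ∈ L v) ∧ ∀ ⦃u w : V⦄, G.Adj u w → φ u ≠ φ w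

/-- `G` is weakly `d`-degenerate: every subgraph `G'` (with at least one vertex) either has
minimum degree at most `d`, or contains a set of `d+1` vertices of degree `d+1` (in `G'`)
inducing a connected subgraph. -/
def WeaklyDegenerate {V : Type*} (G : SimpleGraph V) (d : ℕ) : Prop :=
  ∀ H : G.Subgraph, H.verts.Nonempty →
    (∃ v ∈ H.verts, (H.neighborSet v).ncard ≤ d) ∨
    (∃ P : Finset V, ↑P ⊆ H.verts ∧ P.card = d + 1 ∧
      (∀ v ∈ P, (H.neighborSet v).ncard = d + 1) ∧ (H.induce ↑P).Connected)

open Classical in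
/-- number of neighbours of `v` in `W` -/
noncomputable def nb {V : Type} (G : SimpleGraph V) (W : Finset V) (v : V) : ℕ :=
  (W.filter (fun w => G.Adj v w)).card

def ProperOn {V : Type} (G : SimpleGraph V) (W : Finset V) (φ : V → ℕ) : Prop :=
  ∀ u ∈ W, ∀ w ∈ W, G.Adj u w → φ u ≠ φ w

open Classical in
theorem greedy {V : Type} (G : SimpleGraph V) (L' : V → Finset ℕ) (A : Finset V) (φ : V → ℕ)
    (hφ : ProperOn G A φ) (n : ℕ) : ∀ P : Finset V, P.card = n → Disjoint A P →
    (∀ Q ⊆ P, Q.Nonempty → ∃ v ∈ Q, nb G (A ∪ Q) v < (L' v).card) →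
    ∃ ψ : V → ℕ, (∀ v, v ∉ P → ψ v = φ v) ∧ ProperOn G (A ∪ P) ψ ∧ ∀ v ∈ P, ψ v ∈ L' v := by
  induction n with
  | zero =>
    intro P hP _ _
    rw [Finset.card_eq_zero] at hP
    subst hP
    exact ⟨φ, by simp, by simpa using hφ, by simp⟩
  | succ n ih =>
    intro P hP hd hQ
    have hne : P.Nonempty := by
      rw [← Finset.card_pos]; omega
    obtain ⟨v, hv, hlt⟩ := hQ P subset_rfl hne
    have hvA : v ∉ A := fun h => (Finset.disjoint_left.mp hd h) hv
    obtain ⟨ψ, h1, h2, h3⟩ := ih (P.erase v) (by rw [Finset.card_erase_of_mem hv]; omega)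
      (hd.mono_right (Finset.erase_subset _ _))
      (fun Q hQP hQn => hQ Q (hQP.trans (Finset.erase_subset _ _)) hQn)
    have hcard : (((A ∪ P).filter (fun w => G.Adj v w)).image ψ).card < (L' v).card :=
      lt_of_le_of_lt Finset.card_image_le hlt
    obtain ⟨c, hc, hc'⟩ := Finset.exists_mem_notMem_of_card_lt_card hcard
    have hcne : ∀ w ∈ A ∪ P, G.Adj v w → ψ w ≠ c := by
      intro w hw hadj he
      exact hc' (Finset.mem_image.mpr ⟨w, Finset.mem_filter.mpr ⟨hw, hadj⟩, he⟩)
    have hmem : ∀ u ∈ A ∪ P, u ≠ v → u ∈ A ∪ P.erase v := by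
      intro u hu huv
      simp only [Finset.mem_union, Finset.mem_erase] at hu ⊢
      tauto
    refine ⟨Function.update ψ v c, ?_, ?_, ?_⟩
    · intro u hu
      have huv : u ≠ v := by rintro rfl; exact hu hv
      rw [Function.update_of_ne huv]
      exact h1 u (fun h => hu (Finset.mem_of_mem_erase h))
    · intro u hu w hw hadj
      by_cases huv : u = v
      · subst huv
        have : w ≠ u := hadj.ne'
        rw [Function.update_self, Function.update_of_ne this]
        exact (hcne w hw hadj).symm
      · by_cases hwv : w = v
        · subst hwv
          rw [Function.update_self, Function.update_of_ne huv]
          exact hcne u hu hadj.symm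
        · rw [Function.update_of_ne huv, Function.update_of_ne hwv]
          exact h2 u (hmem u hu huv) w (hmem w hw hwv) hadj
    · intro u hu
      by_cases huv : u = v
      · subst huv; rwa [Function.update_self]
      · rw [Function.update_of_ne huv]
        exact h3 u (Finset.mem_erase.mpr ⟨huv, hu⟩)

theorem nb_mono {V : Type} (G : SimpleGraph V) {W W' : Finset V} (h : W ⊆ W') (v : V) :
    nb G W v ≤ nb G W' v := by
  classical
  exact Finset.card_le_card (Finset.filter_subset_filter _ h)

theorem nb_lt {V : Type} (G : SimpleGraph V) {W W' : Finset V} (h : W ⊆ W') (v w : V)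
    (hw : w ∈ W') (hw' : w ∉ W) (ha : G.Adj v w) : nb G W v < nb G W' v := by
  classical
  apply Finset.card_lt_card
  refine ⟨Finset.filter_subset_filter _ h, fun hh => ?_⟩
  have := hh (Finset.mem_filter.mpr ⟨hw, ha⟩)
  exact hw' (Finset.mem_filter.mp this).1

open Classical in
theorem exists_good {V : Type} [Fintype V] (G : SimpleGraph V) (d : ℕ)
    (hG : WeaklyDegenerate G d) (W : Finset V) (hW : W.Nonempty) :
    ∃ P ⊆ W, P.Nonempty ∧ P.card ≤ d + 1 ∧ (∀ v ∈ P, nb G W v ≤ d + 1) ∧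
      ∀ Q ⊆ P, Q.Nonempty → Q.card ≤ d → ∃ v ∈ Q, nb G ((W \ P) ∪ Q) v ≤ d := by
  have key : ∀ v ∈ W, (((⊤ : G.Subgraph).induce (W : Set V)).neighborSet v).ncard = nb G W v := by
    intro v hv
    unfold nb
    rw [← Set.ncard_coe_finset]
    congr 1
    ext w
    simp [SimpleGraph.Subgraph.mem_neighborSet, hv]
  rcases hG ((⊤ : G.Subgraph).induce (W : Set V)) (by simpa using hW) with
    ⟨v, hv, hd⟩ | ⟨P, hPW, hPc, hPd, hPconn⟩
  · have hv' : v ∈ W := by simpa using hv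
    rw [key v hv'] at hd
    refine ⟨{v}, by simpa using hv', by simp, by simp, by simpa using hd.trans (Nat.le_succ d), ?_⟩
    intro Q hQ hQn _
    obtain ⟨u, hu⟩ := hQn
    have : u = v := by simpa using hQ hu
    subst this
    refine ⟨u, hu, (nb_mono G ?_ u).trans hd⟩
    intro x hx
    simp only [Finset.mem_union, Finset.mem_sdiff] at hx
    rcases hx with hx | hx
    · exact hx.1
    · have : x = u := by simpa using hQ hx
      rwa [this]
  · have hPW' : P ⊆ W := by
      intro x hx
      simpa using hPW (Finset.mem_coe.mpr hx)
    have hdeg : ∀ v ∈ P, nb G W v = d + 1 := fun v hv => by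
      rw [← key v (hPW' hv)]; exact hPd v hv
    refine ⟨P, hPW', by rw [← Finset.card_pos]; omega, hPc.le, fun v hv => (hdeg v hv).le, ?_⟩
    intro Q hQ hQn hQc
    obtain ⟨a, ha⟩ := hQn
    obtain ⟨b, hb, hbQ⟩ := Finset.exists_mem_notMem_of_card_lt_card (s := Q) (t := P) (by omega)
    have hc := hPconn.coe.preconnected
    obtain ⟨p⟩ := hc ⟨a, by simpa using hQ ha⟩ ⟨b, by simpa using hb⟩
    obtain ⟨e, -, he1, he2⟩ := p.exists_boundary_dart {x | x.1 ∈ Q} ha hbQ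
    have hadj : G.Adj e.fst.1 e.snd.1 := by
      have := e.adj
      rw [SimpleGraph.Subgraph.coe_adj] at this
      exact this.adj_sub
    have hsP : e.snd.1 ∈ P := by
      have := e.snd.2
      simpa using this
    refine ⟨e.fst.1, he1, ?_⟩
    have := nb_lt G (W := (W \ P) ∪ Q) (W' := W)
      (Finset.union_subset Finset.sdiff_subset (hQ.trans hPW')) e.fst.1 e.snd.1 (hPW' hsP)
      (by
        simp only [Finset.mem_union, Finset.mem_sdiff, not_or]
        exact ⟨fun h => h.2 hsP, he2⟩) hadj
    rw [hdeg _ (hQ he1)] at this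
    omega

open Classical in
noncomputable def push {α : Type} (Ω : Finset α) (E : α → Finset α) (μ : α → ℝ) (ψ : α) : ℝ :=
  ∑ φ ∈ Ω, μ φ * (if ψ ∈ E φ then ((E φ).card : ℝ)⁻¹ else 0)

open Classical in
theorem push_sum {α : Type} (Ω : Finset α) (E : α → Finset α) (hE : ∀ φ, E φ ⊆ Ω) (μ : α → ℝ)
    (A : α → Prop) : ∑ ψ ∈ Ω.filter A, push Ω E μ ψ =
      ∑ φ ∈ Ω, μ φ * ((((E φ).filter A).card : ℝ) * ((E φ).card : ℝ)⁻¹) := by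
  unfold push
  rw [Finset.sum_comm]
  refine Finset.sum_congr rfl fun φ _ => ?_
  rw [← Finset.mul_sum, ← Finset.sum_filter, Finset.sum_const, nsmul_eq_mul]
  congr 3
  congr 1
  ext ψ
  simp only [Finset.mem_filter]
  constructor
  · rintro ⟨⟨_, h⟩, h'⟩; exact ⟨h', h⟩
  · rintro ⟨h', h⟩; exact ⟨⟨hE φ h', h⟩, h'⟩

open Classical in
/-- general lower bound -/
theorem push_ge {α : Type} (Ω : Finset α) (E : α → Finset α) (hE : ∀ φ, E φ ⊆ Ω) (μ : α → ℝ)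
    (h0 : ∀ φ, 0 ≤ μ φ) (A B : α → Prop) (κ : ℝ)
    (hAB : ∀ φ ∈ Ω, μ φ ≠ 0 → B φ →
      κ ≤ (((E φ).filter A).card : ℝ) * ((E φ).card : ℝ)⁻¹) :
    (∑ φ ∈ Ω.filter B, μ φ) * κ ≤ ∑ ψ ∈ Ω.filter A, push Ω E μ ψ := by
  rw [push_sum Ω E hE, Finset.sum_mul, Finset.sum_filter]
  refine Finset.sum_le_sum fun φ hφ => ?_
  split_ifs with hB
  · by_cases h : μ φ = 0
    · simp [h]
    · exact mul_le_mul_of_nonneg_left (hAB φ hφ h hB) (h0 φ)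
  · exact mul_nonneg (h0 φ) (by positivity)

open Classical in
noncomputable def pr {α : Type} (Ω : Finset α) (μ : α → ℝ) (A : α → Prop) : ℝ :=
  ∑ φ ∈ Ω.filter A, μ φ

open Classical in
def GoodDist {V : Type} [Fintype V] (G : SimpleGraph V) (L : V → Finset ℕ) (d : ℕ) (ε δ : ℝ)
    (W : Finset V) (μ : (V → ℕ) → ℝ) : Prop :=
  (∀ φ, 0 ≤ μ φ) ∧ (∀ φ, μ φ ≠ 0 → ProperOn G W φ) ∧
  (∑ φ ∈ Fintype.piFinset L, μ φ = 1) ∧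
  (∀ v ∈ W, ∀ c ∈ L v, ε ≤ pr (Fintype.piFinset L) μ (fun φ => φ v = c)) ∧
  (∀ S ⊆ W, S.card ≤ d → ∀ c : ℕ,
    δ ^ S.card ≤ pr (Fintype.piFinset L) μ (fun φ => ∀ v ∈ S, φ v ≠ c))

open Classical in
theorem step {V : Type} [Fintype V] (G : SimpleGraph V) (L : V → Finset ℕ) (d : ℕ) (hd : 1 ≤ d)
    (hL : ∀ v, (L v).card = d + 2) (δ : ℝ) (hδ : δ = (((d : ℝ) + 2) ^ (d + 1))⁻¹)
    (W P : Finset V) (hPW : P ⊆ W) (hPc : P.card ≤ d + 1)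
    (hPd : ∀ v ∈ P, nb G W v ≤ d + 1)
    (hPQ : ∀ Q ⊆ P, Q.Nonempty → Q.card ≤ d → ∃ v ∈ Q, nb G ((W \ P) ∪ Q) v ≤ d)
    (μ : (V → ℕ) → ℝ) (hμ : GoodDist G L d (δ ^ d * δ) δ (W \ P) μ) :
    ∃ μ', GoodDist G L d (δ ^ d * δ) δ W μ' := by
  obtain ⟨h0, hpr, h1, hi, hii⟩ := hμ
  set Ω := Fintype.piFinset L with hΩ
  have hδ0 : 0 < δ := by rw [hδ]; positivity
  have hδ1 : δ ≤ 1 := by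
    rw [hδ]
    apply inv_le_one_of_one_le₀
    apply one_le_pow₀
    have : (0 : ℝ) ≤ d := by positivity
    linarith
  have hWP : (W \ P) ∪ P = W := Finset.sdiff_union_of_subset hPW
  have hdis : Disjoint (W \ P) P := Finset.sdiff_disjoint
  let E : (V → ℕ) → Finset (V → ℕ) := fun φ =>
    Ω.filter (fun ψ => ProperOn G W ψ ∧ ∀ v, v ∉ P → ψ v = φ v)
  have hE : ∀ φ, E φ ⊆ Ω := fun φ => Finset.filter_subset _ _
  have hcard : ∀ φ, ((E φ).card : ℝ) ≤ ((d : ℝ) + 2) ^ (d + 1) := by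
    intro φ
    have : (E φ).card ≤ (P.pi L).card := by
      apply Finset.card_le_card_of_injOn (fun ψ => fun v _ => ψ v)
      · intro ψ hψ
        have hψ' := (Finset.mem_filter.mp hψ).1
        rw [hΩ, Fintype.mem_piFinset] at hψ'
        exact Finset.mem_coe.mpr (Finset.mem_pi.mpr fun v _ => hψ' v)
      · intro ψ hψ ψ' hψ' heq
        have a := (Finset.mem_filter.mp hψ).2.2
        have b := (Finset.mem_filter.mp hψ').2.2
        funext v
        by_cases hv : v ∈ P
        · exact congrFun (congrFun heq v) hv
        · rw [a v hv, b v hv]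
    rw [Finset.card_pi, Finset.prod_congr rfl (fun v _ => hL v), Finset.prod_const] at this
    have h2 : (d + 2) ^ P.card ≤ (d + 2) ^ (d + 1) := Nat.pow_le_pow_right (by omega) hPc
    exact_mod_cast this.trans h2
  -- extension avoiding a colour
  have ext1 : ∀ φ ∈ Ω, μ φ ≠ 0 → ∀ S : Finset V, S.card ≤ d → ∀ c,
      ∃ ψ ∈ E φ, ∀ v ∈ S, v ∈ P → ψ v ≠ c := by
    intro φ hφ hne S hS c
    obtain ⟨ψ, a1, a2, a3⟩ := greedy G (fun v => if v ∈ S then (L v).erase c else L v) (W \ P) φ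
      (hpr φ hne) P.card P rfl hdis (by
        intro Q hQ hQn
        by_cases hQS : Q ⊆ S
        · obtain ⟨v, hv, hlt⟩ := hPQ Q hQ hQn ((Finset.card_le_card hQS).trans hS)
          refine ⟨v, hv, ?_⟩
          rw [if_pos (hQS hv)]
          have := Finset.pred_card_le_card_erase (s := L v) (a := c)
          rw [hL v] at this
          omega
        · obtain ⟨v, hv, hvS⟩ := Finset.not_subset.mp hQS
          refine ⟨v, hv, ?_⟩
          rw [if_neg hvS, hL v]
          have b1 := hPd v (hQ hv)
          have b2 := nb_mono G (W := (W \ P) ∪ Q) (W' := W)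
            (Finset.union_subset Finset.sdiff_subset (hQ.trans hPW)) v
          omega)
    rw [hWP] at a2
    rw [hΩ, Fintype.mem_piFinset] at hφ
    refine ⟨ψ, Finset.mem_filter.mpr ⟨?_, a2, a1⟩, ?_⟩
    · rw [hΩ, Fintype.mem_piFinset]
      intro v
      by_cases hv : v ∈ P
      · have := a3 v hv
        split_ifs at this with hvS
        · exact Finset.mem_of_mem_erase this
        · exact this
      · rw [a1 v hv]; exact hφ v
    · intro v hvS hvP
      have := a3 v hvP
      rw [if_pos hvS] at this
      exact Finset.ne_of_mem_erase this
  -- extension with prescribed colour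
  have ext2 : ∀ φ ∈ Ω, μ φ ≠ 0 → ∀ v ∈ P, ∀ c ∈ L v,
      (∀ w ∈ (W \ P).filter (fun w => G.Adj v w), φ w ≠ c) → ∃ ψ ∈ E φ, ψ v = c := by
    intro φ hφ hne v hv c hc hav
    have hvA : v ∉ W \ P := fun h => (Finset.mem_sdiff.mp h).2 hv
    have hpr1 : ProperOn G (insert v (W \ P)) (Function.update φ v c) := by
      intro u hu w hw hadj
      by_cases huv : u = v
      · subst huv
        have hwu : w ≠ u := hadj.ne'
        rw [Function.update_self, Function.update_of_ne hwu]
        exact (hav w (Finset.mem_filter.mpr ⟨Finset.mem_of_mem_insert_of_ne hw hwu, hadj⟩)).symm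
      · by_cases hwv : w = v
        · subst hwv
          rw [Function.update_self, Function.update_of_ne huv]
          exact hav u (Finset.mem_filter.mpr ⟨Finset.mem_of_mem_insert_of_ne hu huv, hadj.symm⟩)
        · rw [Function.update_of_ne huv, Function.update_of_ne hwv]
          exact hpr φ hne u (Finset.mem_of_mem_insert_of_ne hu huv) w
            (Finset.mem_of_mem_insert_of_ne hw hwv) hadj
    have hun : insert v (W \ P) ∪ P.erase v = W := by
      ext x
      simp only [Finset.mem_union, Finset.mem_insert, Finset.mem_sdiff, Finset.mem_erase]
      by_cases hx : x = v
      · subst hx; simp [hPW hv]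
      · have := @hPW x
        tauto
    obtain ⟨ψ, a1, a2, a3⟩ := greedy G L (insert v (W \ P)) _ hpr1 (P.erase v).card (P.erase v) rfl
      (by
        rw [Finset.disjoint_left]
        intro x hx hx'
        simp only [Finset.mem_insert, Finset.mem_sdiff, Finset.mem_erase] at hx hx'
        tauto)
      (by
        intro Q hQ hQn
        obtain ⟨w, hw⟩ := hQn
        refine ⟨w, hw, ?_⟩
        have b1 := hPd w (Finset.mem_of_mem_erase (hQ hw))
        have b2 := nb_mono G (W := insert v (W \ P) ∪ Q) (W' := W)
          ((Finset.union_subset_union_right hQ).trans hun.subset) w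
        rw [hL w]
        omega)
    rw [hun] at a2
    rw [hΩ, Fintype.mem_piFinset] at hφ
    have hvc : ψ v = c := by rw [a1 v (by simp), Function.update_self]
    refine ⟨ψ, Finset.mem_filter.mpr ⟨?_, a2, ?_⟩, hvc⟩
    · rw [hΩ, Fintype.mem_piFinset]
      intro u
      by_cases hu : u ∈ P.erase v
      · exact a3 u hu
      · by_cases huv : u = v
        · subst huv; rwa [hvc]
        · rw [a1 u hu, Function.update_of_ne huv]; exact hφ u
    · intro u hu
      have huv : u ≠ v := by rintro rfl; exact hu hv
      rw [a1 u (fun h => hu (Finset.mem_of_mem_erase h)), Function.update_of_ne huv]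
  have hEne : ∀ φ ∈ Ω, μ φ ≠ 0 → 0 < (E φ).card := by
    intro φ hφ hne
    obtain ⟨ψ, hψ, -⟩ := ext1 φ hφ hne ∅ (by simp) 0
    exact Finset.card_pos.mpr ⟨ψ, hψ⟩
  -- bounds
  have bd1 : ∀ (A B : (V → ℕ) → Prop), (∀ φ ∈ Ω, μ φ ≠ 0 → B φ → ∃ ψ ∈ E φ, A ψ) →
      pr Ω μ B * δ ≤ pr Ω (push Ω E μ) A := by
    intro A B hAB
    refine push_ge Ω E hE μ h0 A B δ fun φ hφ hne hB => ?_
    obtain ⟨ψ, hψ, hA⟩ := hAB φ hφ hne hB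
    have c1 : (1 : ℝ) ≤ ((E φ).filter A).card := by
      exact_mod_cast Finset.card_pos.mpr ⟨ψ, Finset.mem_filter.mpr ⟨hψ, hA⟩⟩
    have c0 : (0 : ℝ) < (E φ).card := by exact_mod_cast hEne φ hφ hne
    have c2 : δ ≤ ((E φ).card : ℝ)⁻¹ := by
      rw [hδ]; exact inv_anti₀ c0 (hcard φ)
    nlinarith
  have bd2 : ∀ (A B : (V → ℕ) → Prop), (∀ φ ∈ Ω, μ φ ≠ 0 → B φ → ∀ ψ ∈ E φ, A ψ) →
      pr Ω μ B ≤ pr Ω (push Ω E μ) A := by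
    intro A B hAB
    rw [← mul_one (pr Ω μ B)]
    refine push_ge Ω E hE μ h0 A B 1 fun φ hφ hne hB => ?_
    rw [Finset.filter_true_of_mem (hAB φ hφ hne hB)]
    have c0 : (0 : ℝ) < (E φ).card := by exact_mod_cast hEne φ hφ hne
    rw [mul_inv_cancel₀ c0.ne']
  refine ⟨push Ω E μ, ?_, ?_, ?_, ?_, ?_⟩
  · intro ψ
    refine Finset.sum_nonneg fun φ _ => mul_nonneg (h0 φ) ?_
    split_ifs <;> positivity
  · intro ψ hψ
    obtain ⟨φ, hφ, hne⟩ := Finset.exists_ne_zero_of_sum_ne_zero hψ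
    by_cases hm : ψ ∈ E φ
    · exact (Finset.mem_filter.mp hm).2.1
    · simp [hm] at hne
  · have := push_sum Ω E hE μ (fun _ => True)
    simp only [Finset.filter_true] at this
    rw [this, ← h1]
    refine Finset.sum_congr rfl fun φ hφ => ?_
    by_cases h : μ φ = 0
    · simp [h]
    · have c0 : (0 : ℝ) < (E φ).card := by exact_mod_cast hEne φ hφ h
      rw [mul_inv_cancel₀ c0.ne', mul_one]
  · intro v hv c hc
    by_cases hvP : v ∈ P
    · refine le_trans ?_ (bd1 _
        (fun φ => ∀ w ∈ (W \ P).filter (fun w => G.Adj v w), φ w ≠ c)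
        (fun φ hφ hne hB => ext2 φ hφ hne v hvP c hc hB))
      apply mul_le_mul_of_nonneg_right _ hδ0.le
      have hle : ((W \ P).filter (fun w => G.Adj v w)).card ≤ d := by
        obtain ⟨u, hu, hle⟩ := hPQ {v} (by simpa using hvP) (by simp) (by simpa using hd)
        have : u = v := by simpa using hu
        subst this
        exact (nb_mono G Finset.subset_union_left u).trans hle
      refine le_trans ?_ (hii _ (Finset.filter_subset _ _) hle c)
      exact pow_le_pow_of_le_one hδ0.le hδ1 hle
    · refine (hi v (Finset.mem_sdiff.mpr ⟨hv, hvP⟩) c hc).trans (bd2 _ _ ?_)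
      intro φ hφ hne hB ψ hψ
      rw [(Finset.mem_filter.mp hψ).2.2 v hvP]; exact hB
  · intro S hSW hS c
    by_cases hSP : Disjoint S P
    · refine (hii S ?_ hS c).trans (bd2 _ _ ?_)
      · intro x hx
        exact Finset.mem_sdiff.mpr ⟨hSW hx, Finset.disjoint_left.mp hSP hx⟩
      · intro φ hφ hne hB ψ hψ v hv
        rw [(Finset.mem_filter.mp hψ).2.2 v (Finset.disjoint_left.mp hSP hv)]
        exact hB v hv
    · have hlt : (S \ P).card + 1 ≤ S.card := by
        apply Finset.card_lt_card
        refine ⟨Finset.sdiff_subset, fun hh => hSP ?_⟩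
        rw [Finset.disjoint_left]
        intro x hx
        exact (Finset.mem_sdiff.mp (hh hx)).2
      have := hii (S \ P) (Finset.sdiff_subset_sdiff hSW subset_rfl) (by omega) c
      refine le_trans ?_ (bd1 _ (fun φ => ∀ v ∈ S \ P, φ v ≠ c) ?_)
      · calc δ ^ S.card ≤ δ ^ ((S \ P).card + 1) := pow_le_pow_of_le_one hδ0.le hδ1 hlt
          _ = δ ^ (S \ P).card * δ := pow_succ _ _
          _ ≤ _ := mul_le_mul_of_nonneg_right this hδ0.le
      · intro φ hφ hne hB
        obtain ⟨ψ, hψ, hav⟩ := ext1 φ hφ hne S hS c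
        refine ⟨ψ, hψ, fun v hv => ?_⟩
        by_cases hvP : v ∈ P
        · exact hav v hv hvP
        · rw [(Finset.mem_filter.mp hψ).2.2 v hvP]
          exact hB v (Finset.mem_sdiff.mpr ⟨hv, hvP⟩)

open Classical in
theorem allW {V : Type} [Fintype V] (G : SimpleGraph V) (L : V → Finset ℕ) (d : ℕ) (hd : 1 ≤ d)
    (hL : ∀ v, (L v).card = d + 2) (hG : WeaklyDegenerate G d)
    (δ : ℝ) (hδ : δ = (((d : ℝ) + 2) ^ (d + 1))⁻¹) (W : Finset V) :
    ∃ μ, GoodDist G L d (δ ^ d * δ) δ W μ := by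
  induction W using Finset.strongInduction with
  | H W ih =>
  rcases W.eq_empty_or_nonempty with rfl | hW
  · have hne : ∀ v, (L v).Nonempty := fun v => by
      rw [← Finset.card_pos, hL v]; omega
    choose φ0 hφ0 using hne
    have hm : φ0 ∈ Fintype.piFinset L := Fintype.mem_piFinset.mpr hφ0
    refine ⟨fun φ => if φ = φ0 then 1 else 0, ?_, ?_, ?_, ?_, ?_⟩
    · intro φ; dsimp only; split_ifs <;> norm_num
    · intro φ _ u hu; simp at hu
    · simp [hm]
    · simp
    · intro S hS _ c
      have : S = ∅ := Finset.subset_empty.mp hS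
      subst this
      simp [hm, pr]
  · obtain ⟨P, hPW, hPn, hPc, hPd, hPQ⟩ := exists_good G d hG W hW
    obtain ⟨μ, hμ⟩ := ih (W \ P) (Finset.sdiff_ssubset hPW hPn)
    exact step G L d hd hL δ hδ W P hPW hPc hPd hPQ μ hμ

open Classical in
theorem zeroW {V : Type} [Fintype V] (G : SimpleGraph V) (L : V → Finset ℕ)
    (hL : ∀ v, (L v).card = 2) (hG : WeaklyDegenerate G 0) (W : Finset V) :
    ∃ φ φ' : V → ℕ, (∀ v, L v = {φ v, φ' v}) ∧ ProperOn G W φ ∧ ProperOn G W φ' := by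
  induction W using Finset.strongInduction with
  | H W ih =>
  rcases W.eq_empty_or_nonempty with rfl | hW
  · have : ∀ v, ∃ x y, L v = {x, y} := fun v => by
      obtain ⟨x, y, -, h⟩ := Finset.card_eq_two.mp (hL v)
      exact ⟨x, y, h⟩
    choose φ φ' h using this
    exact ⟨φ, φ', h, by intro u hu; simp at hu, by intro u hu; simp at hu⟩
  · obtain ⟨P, hPW, ⟨v, hv⟩, -, hPd, -⟩ := exists_good G 0 hG W hW
    obtain ⟨φ, φ', h1, h2, h3⟩ := ih (W.erase v) (Finset.erase_ssubset (hPW hv))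
    have hdeg := hPd v hv
    obtain ⟨u, hu⟩ : ∃ u, ∀ w ∈ W, G.Adj v w → w = u := by
      by_cases hex : ∃ u ∈ W, G.Adj v u
      · obtain ⟨u, huW, hua⟩ := hex
        refine ⟨u, fun w hw ha => ?_⟩
        exact Finset.card_le_one.mp hdeg w (Finset.mem_filter.mpr ⟨hw, ha⟩) u
          (Finset.mem_filter.mpr ⟨huW, hua⟩)
      · exact ⟨v, fun w hw ha => (hex ⟨w, hw, ha⟩).elim⟩
    have hne : ∀ w, φ w ≠ φ' w := by
      intro w he
      have := hL w
      rw [h1 w, he] at this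
      simp at this
    obtain ⟨x, y, hxy, hx, hy⟩ : ∃ x y, L v = {x, y} ∧ x ≠ φ u ∧ y ≠ φ' u := by
      by_cases h : φ v ≠ φ u ∧ φ' v ≠ φ' u
      · exact ⟨φ v, φ' v, h1 v, h.1, h.2⟩
      · refine ⟨φ' v, φ v, by rw [h1 v, Finset.pair_comm], ?_⟩
        have := hne v
        have := hne u
        grind
    have upd : ∀ (χ : V → ℕ) (z : ℕ), ProperOn G (W.erase v) χ → z ≠ χ u →
        ProperOn G W (Function.update χ v z) := by
      intro χ z hχ hz a ha b hb hadj
      by_cases hav : a = v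
      · subst hav
        have hba : b ≠ a := hadj.ne'
        rw [Function.update_self, Function.update_of_ne hba, hu b hb hadj]
        exact hz
      · by_cases hbv : b = v
        · subst hbv
          rw [Function.update_self, Function.update_of_ne hav, hu a ha hadj.symm]
          exact hz.symm
        · rw [Function.update_of_ne hav, Function.update_of_ne hbv]
          exact hχ a (Finset.mem_erase.mpr ⟨hav, ha⟩) b (Finset.mem_erase.mpr ⟨hbv, hb⟩) hadj
    refine ⟨Function.update φ v x, Function.update φ' v y, ?_, upd _ _ h2 hx, upd _ _ h3 hy⟩
    intro w
    by_cases hw : w = v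
    · subst hw; simpa using hxy
    · simpa [hw] using h1 w

theorem stmt11 (d : ℕ) :
    ∃ ε : ℝ, 0 < ε ∧ ∃ δ : ℝ, 0 < δ ∧
      ∀ (V : Type) [Fintype V] (G : SimpleGraph V) (L : V → Finset ℕ),
        (∀ v, (L v).card = d + 2) → WeaklyDegenerate G d →
        ∃ (s : Finset ℕ) (p : ℕ → ℝ) (f : ℕ → V → ℕ),
          (∀ i ∈ s, 0 ≤ p i) ∧ ∑ i ∈ s, p i = 1 ∧
          (∀ i ∈ s, IsLColoring G L (f i)) ∧
          (∀ v : V, ∀ c ∈ L v, ε ≤ ∑ i ∈ s.filter fun i => f i v = c, p i) ∧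
          (∀ S : Finset V, S.card ≤ d → ∀ c : ℕ,
            δ ^ S.card ≤ ∑ i ∈ s.filter fun i => ∀ v ∈ S, f i v ≠ c, p i) := by
  classical
  rcases Nat.eq_zero_or_pos d with rfl | hd
  · refine ⟨1 / 2, by norm_num, 1, by norm_num, ?_⟩
    intro V _ G L hL hG
    obtain ⟨φ, φ', h1, h2, h3⟩ := zeroW G L hL hG Finset.univ
    refine ⟨{0, 1}, fun _ => 1 / 2, fun i => if i = 0 then φ else φ', ?_, ?_, ?_, ?_, ?_⟩
    · intro i _; norm_num
    · norm_num
    · intro i hi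
      dsimp only
      split_ifs
      · exact ⟨fun v => by rw [h1 v]; simp,
          fun u w h => h2 u (Finset.mem_univ _) w (Finset.mem_univ _) h⟩
      · exact ⟨fun v => by rw [h1 v]; simp,
          fun u w h => h3 u (Finset.mem_univ _) w (Finset.mem_univ _) h⟩
    · intro v c hc
      rw [h1 v] at hc
      rw [Finset.sum_filter, Finset.sum_pair (by norm_num)]
      simp only [Finset.mem_insert, Finset.mem_singleton] at hc
      rcases hc with rfl | rfl
      · simp; split_ifs <;> norm_num
      · simp; split_ifs <;> norm_num
    · intro S hS c
      have : S = ∅ := by simpa using hS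
      subst this
      simp
  · refine ⟨((((d : ℝ) + 2) ^ (d + 1))⁻¹) ^ d * (((d : ℝ) + 2) ^ (d + 1))⁻¹, by positivity,
      (((d : ℝ) + 2) ^ (d + 1))⁻¹, by positivity, ?_⟩
    intro V _ G L hL hG
    obtain ⟨μ, h0, hpr, h1, hi, hii⟩ := allW G L d hd hL hG _ rfl Finset.univ
    obtain ⟨g, hg⟩ := exists_injective_nat (V → ℕ)
    have hinv : ∀ φ, Function.invFun g (g φ) = φ := Function.leftInverse_invFun hg
    set Ω := Fintype.piFinset L
    have conv : ∀ A : (V → ℕ) → Prop,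
        ∑ i ∈ ((Ω.filter (fun φ => μ φ ≠ 0)).image g).filter (fun i => A (Function.invFun g i)),
          μ (Function.invFun g i) = pr Ω μ A := by
      intro A
      rw [pr, Finset.sum_filter, Finset.sum_image (fun a _ b _ h => hg h), Finset.sum_filter,
        Finset.sum_filter]
      refine Finset.sum_congr rfl fun φ _ => ?_
      rw [hinv]
      by_cases h : μ φ = 0 <;> simp [h]
    refine ⟨(Ω.filter (fun φ => μ φ ≠ 0)).image g, fun i => μ (Function.invFun g i),
      fun i => Function.invFun g i, ?_, ?_, ?_, ?_, ?_⟩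
    · intro i _; exact h0 _
    · have := conv (fun _ => True)
      simp only [Finset.filter_true] at this
      rw [this, pr]
      simpa using h1
    · intro i hi'
      obtain ⟨φ, hφ, rfl⟩ := Finset.mem_image.mp hi'
      obtain ⟨hφ1, hφ2⟩ := Finset.mem_filter.mp hφ
      dsimp only
      rw [hinv]
      exact ⟨fun v => Fintype.mem_piFinset.mp hφ1 v,
        fun u w h => hpr φ hφ2 u (Finset.mem_univ _) w (Finset.mem_univ _) h⟩
    · intro v c hc
      refine (hi v (Finset.mem_univ _) c hc).trans (le_of_eq ?_)
      rw [← conv]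
      congr!
    · intro S hS c
      refine (hii S (Finset.subset_univ _) hS c).trans (le_of_eq ?_)
      rw [← conv]
      congr!
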